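/- Let cells be indexed by Fin n with a symmetric nonnegative workload matrix w, and let f, f' : Fin n → L be two assignments into a finite set L with capacity Wcap. Fix two distinct locations l₀, l₁ ∈ L and suppose f' agrees with f on every cell not assigned to l₀ or l₁ (f' i = f i whenever f i ∉ {l₀, l₁}) and f' only reassigns cells within {l₀, l₁} (f' i ∈ {l₀, l₁} whenever f i ∈ {l₀, l₁}). Let A₀ = f⁻¹(l₀), A₁ = f⁻¹(l₁), A₀' = f'⁻¹(l₀), A₁' = f'⁻¹(l₁). Then COST(f') − COST(f) = Δ(A₀', A₁') − Δ(A₀, A₁), where Δ(B₀, B₁) = ∑_{i ∈ B₀} ∑_{j ∈ B₁} w i j + max(0, Wt(B₀) − Wcap) + max(0, Wt(B₁) − Wcap); in particular COST(f') < COST(f) if and only if Δ(A₀', A₁') < Δ(A₀, A₁). -/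

import Mathlib

open Finset

theorem aux_cross {n : ℕ} {L : Type*} [DecidableEq L]
    (w : Fin n → Fin n → ℝ) (hsym : ∀ i j, w i j = w j i)
    (g : Fin n → L) (l₀ l₁ : L) (hne : l₀ ≠ l₁) :
    (∑ i ∈ univ.filter (fun i => g i = l₀), ∑ j ∈ univ.filter (fun j => g j = l₁), w i j)
      = ∑ i : Fin n, ∑ j : Fin n,
        if i ≤ j ∧ ((g i = l₀ ∧ g j = l₁) ∨ (g i = l₁ ∧ g j = l₀)) then w i j else 0 := by
  have h1 : (∑ i ∈ univ.filter (fun i => g i = l₀), ∑ j ∈ univ.filter (fun j => g j = l₁), w i j)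
      = (∑ i : Fin n, ∑ j : Fin n, if i ≤ j ∧ g i = l₀ ∧ g j = l₁ then w i j else 0)
      + ∑ i : Fin n, ∑ j : Fin n, if j ≤ i ∧ g i = l₀ ∧ g j = l₁ then w i j else 0 := by
    rw [← sum_add_distrib, sum_filter]
    refine sum_congr rfl fun i _ => ?_
    rw [← sum_add_distrib, sum_filter]
    by_cases hi : g i = l₀
    · rw [if_pos hi]
      refine sum_congr rfl fun j _ => ?_
      by_cases hj : g j = l₁
      · have hij : i ≠ j := by
          rintro rfl
          exact hne (hi.symm.trans hj)
        rcases lt_or_gt_of_ne hij with h | h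
        · simp [hi, hj, h.le, not_le.mpr h]
        · simp [hi, hj, h.le, not_le.mpr h]
      · simp [hj]
    · simp [hi]
  rw [h1]
  conv_lhs => rw [add_comm, sum_comm, add_comm]
  rw [← sum_add_distrib]
  refine sum_congr rfl fun i _ => ?_
  rw [← sum_add_distrib]
  refine sum_congr rfl fun j _ => ?_
  rw [hsym j i]
  grind

theorem aux_load {n : ℕ} {L : Type*} [DecidableEq L]
    (w : Fin n → Fin n → ℝ) (g : Fin n → L) (l : L) :
    (∑ i : Fin n, ∑ j ∈ univ.filter (fun j => i ≤ j ∧ g i = l ∧ g j = l), w i j)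
     = ∑ i ∈ univ.filter (fun i => g i = l),
        ∑ j ∈ (univ.filter (fun i => g i = l)).filter (fun j => i ≤ j), w i j := by
  rw [sum_filter]
  refine sum_congr rfl fun i _ => ?_
  by_cases hi : g i = l
  · rw [if_pos hi, filter_filter]
    refine sum_congr ?_ fun _ _ => rfl
    ext j
    simp [hi, and_comm]
  · simp [hi]

/-- If `f'` differs from `f` only by reassigning cells within the two locations
`l₀, l₁`, then the change in backhaul cost equals the change in the pairwise
objective `Δ` on the corresponding cellsets; in particular `COST(f') < COST(f)`
iff `Δ(A₀', A₁') < Δ(A₀, A₁)`. -/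
theorem cost_change_eq_delta_change {n : ℕ} {L : Type*} [Fintype L] [DecidableEq L]
    (w : Fin n → Fin n → ℝ)
    (hsym : ∀ i j, w i j = w j i)
    (hnn : ∀ i j, 0 ≤ w i j)
    (f f' : Fin n → L) (Wcap : ℝ)
    (l₀ l₁ : L) (hne : l₀ ≠ l₁)
    (hagree : ∀ i, f i ∉ ({l₀, l₁} : Set L) → f' i = f i)
    (hwithin : ∀ i, f i ∈ ({l₀, l₁} : Set L) → f' i ∈ ({l₀, l₁} : Set L))
    (COST : (Fin n → L) → ℝ)
    (hCOST : ∀ g : Fin n → L, COST g =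
      (∑ i : Fin n, ∑ j ∈ univ.filter (fun j => i ≤ j ∧ g i ≠ g j), w i j)
        + ∑ l : L, max 0
            ((∑ i : Fin n, ∑ j ∈ univ.filter (fun j => i ≤ j ∧ g i = l ∧ g j = l), w i j)
              - Wcap))
    (Wt : Finset (Fin n) → ℝ)
    (hWt : ∀ A : Finset (Fin n), Wt A = ∑ i ∈ A, ∑ j ∈ A.filter (fun j => i ≤ j), w i j)
    (Δ : Finset (Fin n) → Finset (Fin n) → ℝ)
    (hΔ : ∀ B₀ B₁ : Finset (Fin n), Δ B₀ B₁ = (∑ i ∈ B₀, ∑ j ∈ B₁, w i j)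
      + max 0 (Wt B₀ - Wcap) + max 0 (Wt B₁ - Wcap)) :
    COST f' - COST f =
      Δ (univ.filter (fun i => f' i = l₀)) (univ.filter (fun i => f' i = l₁))
        - Δ (univ.filter (fun i => f i = l₀)) (univ.filter (fun i => f i = l₁)) ∧
    (COST f' < COST f ↔
      Δ (univ.filter (fun i => f' i = l₀)) (univ.filter (fun i => f' i = l₁))
        < Δ (univ.filter (fun i => f i = l₀)) (univ.filter (fun i => f i = l₁))) := by
  have key : COST f' - COST f =
      Δ (univ.filter (fun i => f' i = l₀)) (univ.filter (fun i => f' i = l₁))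
        - Δ (univ.filter (fun i => f i = l₀)) (univ.filter (fun i => f i = l₁)) := by
    have hsplit : ∀ F : L → ℝ, ∑ l, F l = F l₀ + F l₁ + ∑ l ∈ univ \ {l₀, l₁}, F l := by
      intro F
      rw [← sum_sdiff (subset_univ ({l₀, l₁} : Finset L)), sum_pair hne, add_comm]
    have hA : ∀ i, f i ≠ l₀ → f i ≠ l₁ → f' i = f i := fun i h0 h1 =>
      hagree i (by simp [h0, h1])
    have hB : ∀ i, (f i = l₀ ∨ f i = l₁) → (f' i = l₀ ∨ f' i = l₁) := fun i h => by
      simpa using hwithin i (by simpa using h)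
    have hrest : ∑ l ∈ univ \ {l₀, l₁}, max 0 (Wt (univ.filter (fun i => f' i = l)) - Wcap)
        = ∑ l ∈ univ \ {l₀, l₁}, max 0 (Wt (univ.filter (fun i => f i = l)) - Wcap) := by
      refine sum_congr rfl fun l hl => ?_
      have : univ.filter (fun i => f' i = l) = univ.filter (fun i => f i = l) := by
        ext i
        have := hA i
        have := hB i
        simp at hl ⊢
        grind
      rw [this]
    have hcut : (∑ i : Fin n, ∑ j ∈ univ.filter (fun j => i ≤ j ∧ f' i ≠ f' j), w i j)
        - (∑ i : Fin n, ∑ j : Fin n,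
          if i ≤ j ∧ ((f' i = l₀ ∧ f' j = l₁) ∨ (f' i = l₁ ∧ f' j = l₀)) then w i j else 0)
        = (∑ i : Fin n, ∑ j ∈ univ.filter (fun j => i ≤ j ∧ f i ≠ f j), w i j)
        - (∑ i : Fin n, ∑ j : Fin n,
          if i ≤ j ∧ ((f i = l₀ ∧ f j = l₁) ∨ (f i = l₁ ∧ f j = l₀)) then w i j else 0) := by
      rw [← sum_sub_distrib, ← sum_sub_distrib]
      refine sum_congr rfl fun i _ => ?_
      rw [sum_filter, sum_filter, ← sum_sub_distrib, ← sum_sub_distrib]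
      refine sum_congr rfl fun j _ => ?_
      have := hA i
      have := hB i
      have := hA j
      have := hB j
      by_cases hij : i ≤ j
      · simp only [hij, true_and]
        grind
      · simp [hij]
    rw [hCOST, hCOST, hΔ, hΔ, aux_cross w hsym f' l₀ l₁ hne, aux_cross w hsym f l₀ l₁ hne]
    simp only [aux_load, ← hWt]
    rw [hsplit, hsplit, hrest]
    linarith
  exact ⟨key, by constructor <;> intro h <;> linarith⟩
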